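/- arXiv:1711.08890 — 2 statements merged into one kernel-verified Lean document; each statement's English description precedes it below -/
import Mathlib

section
/- Every connected {Z₂, T_{1,1,3}}-free graph on at least 2 vertices has edge-connectivity equal to its minimum degree. -/
/-!
Write `δ` for the minimum degree and, for a vertex set `X`, let `X°` be the set of vertices of `X`
all of whose neighbours lie in `X`. It suffices that every cut `[X, Xᶜ]` with `X`, `Xᶜ` nonempty
has at least `δ` edges. If `|[X, Xᶜ]| < δ`, then, since `[X, Xᶜ]` is smaller than every degree,
each vertex of `X` has a neighbour in `X°`, and likewise on the other side. So an edge `a b` with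
`a ∈ X`, `b ∉ X` extends to a path `a b y y'` with `y, y' ∈ (Xᶜ)°`. If `b y'` is an edge, the
triangle `y y' b` followed by `b a x` with `x ∈ X°` is an induced `Z₂`; so the path is induced,
and two neighbours `x, z ∈ X°` of `a` would give an induced `Z₂` (triangle `x z a`, then `a b y`)
or an induced `T_{1,1,3}` (legs `x` and `z`, path `a b y y'`). Hence every vertex of `X \ X°` has
at most one neighbour in `X°`, so that `|[X°, X°ᶜ]| ≤ |X \ X°| ≤ |[X, Xᶜ]| < δ` with `∅ ≠ X° ⊊ X`,
and descent on `X` concludes.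
-/

open SimpleGraph

/-- The edge-connectivity of `G`: the minimum number of edges whose deletion disconnects `G`. -/
noncomputable def edgeConn {V : Type*} [Fintype V] (G : SimpleGraph V) : ℕ :=
  sInf {k | ∃ F : Finset (Sym2 V), ↑F ⊆ G.edgeSet ∧ F.card = k ∧ ¬ (G.deleteEdges ↑F).Connected}

/-- The minimum degree of `G`. -/
noncomputable def minDeg {V : Type*} [Fintype V] (G : SimpleGraph V) : ℕ :=
  sInf {d | ∃ v : V, d = (G.neighborSet v).ncard}

/-- `Z₂`: a triangle `{0,1,2}` with a pendant path `2-3-4` of length 2. -/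
def Z2 : SimpleGraph (Fin 5) :=
  SimpleGraph.fromEdgeSet {s(0,1), s(0,2), s(1,2), s(2,3), s(3,4)}

/-- `T_{1,1,3}`: three paths of lengths 1, 1, 3 sharing the common endpoint `0`:
legs `0-1`, `0-2` and path `0-3-4-5`. -/
def T113 : SimpleGraph (Fin 6) :=
  SimpleGraph.fromEdgeSet {s(0,1), s(0,2), s(0,3), s(3,4), s(4,5)}

section InducedSubgraphs

variable {V : Type*} {G : SimpleGraph V}

lemma nonempty_embedding_of_lt {α : Type*} [LinearOrder α] {H : SimpleGraph α} (f : α → V)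
    (hne : ∀ i j, i < j → f i ≠ f j) (hadj : ∀ i j, i < j → (G.Adj (f i) (f j) ↔ H.Adj i j)) :
    Nonempty (H ↪g G) := by
  refine ⟨⟨⟨f, fun i j hij ↦ ?_⟩, fun {i j} ↦ ?_⟩⟩
  · by_contra hne_ij
    rcases lt_or_gt_of_ne hne_ij with h | h
    exacts [hne i j h hij, hne j i h hij.symm]
  · rcases lt_trichotomy i j with h | rfl | h
    · exact hadj i j h
    · exact iff_of_false G.irrefl H.irrefl
    · exact (G.adj_comm _ _).trans ((hadj j i h).trans (H.adj_comm _ _))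

lemma nonempty_Z2_embedding {a b c d e : V} (hab : G.Adj a b) (hac : G.Adj a c) (hbc : G.Adj b c)
    (hcd : G.Adj c d) (hde : G.Adj d e) (had : ¬ G.Adj a d) (hae : ¬ G.Adj a e)
    (hbd : ¬ G.Adj b d) (hbe : ¬ G.Adj b e) (hce : ¬ G.Adj c e) : Nonempty (Z2 ↪g G) := by
  have hne : a ≠ d ∧ a ≠ e ∧ b ≠ d ∧ b ≠ e ∧ c ≠ e := by grind [G.adj_comm]
  refine nonempty_embedding_of_lt ![a, b, c, d, e] ?_ ?_
  · simp [Fin.forall_fin_succ, hab.ne, hac.ne, hbc.ne, hcd.ne, hde.ne, hne]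
  · simp [Fin.forall_fin_succ, Z2, *]

lemma nonempty_T113_embedding {c l m p q t : V} (hcl : G.Adj c l) (hcm : G.Adj c m)
    (hcp : G.Adj c p) (hpq : G.Adj p q) (hqt : G.Adj q t) (hne : l ≠ m) (hlm : ¬ G.Adj l m)
    (hlp : ¬ G.Adj l p) (hlq : ¬ G.Adj l q) (hlt : ¬ G.Adj l t) (hmp : ¬ G.Adj m p)
    (hmq : ¬ G.Adj m q) (hmt : ¬ G.Adj m t) (hcq : ¬ G.Adj c q) (hct : ¬ G.Adj c t)
    (hpt : ¬ G.Adj p t) : Nonempty (T113 ↪g G) := by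
  have hnec : c ≠ q ∧ c ≠ t ∧ p ≠ t := by grind [G.adj_comm]
  have hnel : l ≠ p ∧ l ≠ q ∧ l ≠ t := by grind [G.adj_comm]
  have hnem : m ≠ p ∧ m ≠ q ∧ m ≠ t := by grind [G.adj_comm]
  refine nonempty_embedding_of_lt ![c, l, m, p, q, t] ?_ ?_
  · simp [Fin.forall_fin_succ, hcl.ne, hcm.ne, hcp.ne, hpq.ne, hqt.ne, hne, hnec, hnel, hnem]
  · simp [Fin.forall_fin_succ, T113, *]

end InducedSubgraphs

section EdgeConnectivity

open Finset

variable {V : Type*} [Fintype V] {G : SimpleGraph V}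

lemma minDeg_eq_minDegree [Nonempty V] [DecidableRel G.Adj] : minDeg G = G.minDegree := by
  have hcard (v : V) : (G.neighborSet v).ncard = G.degree v := by
    rw [← Nat.card_coe_set_eq, Nat.card_eq_fintype_card, G.card_neighborSet_eq_degree]
  obtain ⟨v, hv⟩ := G.exists_minimal_degree_vertex
  refine le_antisymm (Nat.sInf_le ⟨v, by rw [hcard, hv]⟩) (le_csInf ⟨_, v, rfl⟩ ?_)
  rintro _ ⟨w, rfl⟩
  rw [hcard]
  exact G.minDegree_le_degree w

variable (G) in
lemma isEdgeConnected_edgeConn : G.IsEdgeConnected (edgeConn G) := by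
  classical
  intro u v s hs
  by_contra huv
  have hs' : edgeConn G ≤ #(G.edgeFinset ∩ s.toFinset) := by
    refine Nat.sInf_le ⟨_, by simp, rfl, fun h ↦ huv ?_⟩
    simpa [← deleteEdges_eq_inter_edgeSet, Set.inter_comm] using h.preconnected u v
  rw [Set.encard_eq_coe_toFinset_card, Nat.cast_lt] at hs
  exact (hs'.trans (card_le_card inter_subset_right)).not_gt hs

lemma le_edgeConn_of_isEdgeConnected [Nontrivial V] {k : ℕ} (hk : G.IsEdgeConnected k) :
    k ≤ edgeConn G := by
  classical
  refine le_csInf ⟨_, G.edgeFinset, by simp, rfl, by simp [not_preconnected_bot, connected_iff]⟩ ?_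
  rintro _ ⟨F, -, rfl, hF⟩
  by_contra! hFk
  exact hF ⟨fun u v ↦ hk u v (by simpa using hFk)⟩

variable [DecidableEq V] [DecidableRel G.Adj]

lemma isEdgeConnected_of_forall_le_card_interedges_compl {k : ℕ}
    (h : ∀ X : Finset V, X.Nonempty → Xᶜ.Nonempty → k ≤ #(G.interedges X Xᶜ)) :
    G.IsEdgeConnected k := by
  classical
  intro u v s hs
  by_contra huv
  let X : Finset V := {w | (G.deleteEdges s).Reachable u w}
  have hcut : #(G.interedges X Xᶜ) ≤ #s.toFinset := by
    refine card_le_card_of_injOn (fun p ↦ s(p.1, p.2)) ?_ ?_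
    · rintro ⟨a, b⟩ hab
      obtain ⟨ha, hb, hadj⟩ : (G.deleteEdges s).Reachable u a ∧ ¬ (G.deleteEdges s).Reachable u b ∧
        G.Adj a b := by simpa [X, mem_interedges_iff] using hab
      by_contra habs
      exact hb (ha.trans (Adj.reachable (by simpa [hadj] using habs)))
    · rintro ⟨a, b⟩ hab ⟨c, d⟩ hcd heq
      simp only [mem_coe, mk_mem_interedges_iff, mem_compl] at hab hcd
      grind
  rw [Set.encard_eq_coe_toFinset_card, Nat.cast_lt] at hs
  exact ((h X ⟨u, by simp [X]⟩ ⟨v, by simpa [X] using huv⟩).trans hcut).not_gt hs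

end EdgeConnectivity

section Cuts

open Finset

lemma exists_mem_adj_notMem {V : Type*} {G : SimpleGraph V} (hG : G.Preconnected) {s : Set V}
    (hs : s.Nonempty) (hsc : sᶜ.Nonempty) : ∃ a ∈ s, ∃ b ∉ s, G.Adj a b := by
  obtain ⟨u, hu⟩ := hs
  obtain ⟨w, hw⟩ := hsc
  obtain ⟨p⟩ := hG u w
  obtain ⟨d, -, hfst, hsnd⟩ := p.exists_boundary_dart s hu hw
  exact ⟨d.fst, hfst, d.snd, hsnd, d.adj⟩

variable {V : Type*} [Fintype V] [DecidableEq V] {G : SimpleGraph V} [DecidableRel G.Adj]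
  {X : Finset V} {v w x : V}

variable (G X) in
/-- The interior `X°` of a vertex set `X`: the vertices of `X` with no neighbour outside `X`, so
that `X \ X°` consists of the ends in `X` of the edges of the cut `[X, Xᶜ]`. -/
def interiorVertices : Finset V := {v ∈ X | G.neighborFinset v ⊆ X}

lemma mem_interiorVertices :
    v ∈ interiorVertices G X ↔ v ∈ X ∧ ∀ w, G.Adj v w → w ∈ X := by
  simp [interiorVertices, subset_iff]

lemma mem_sdiff_interiorVertices :
    v ∈ X \ interiorVertices G X ↔ v ∈ X ∧ ∃ w ∉ X, G.Adj v w := by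
  grind [mem_interiorVertices]

lemma interiorVertices_subset : interiorVertices G X ⊆ X :=
  filter_subset _ _

lemma not_adj_of_mem_interiorVertices (hx : x ∈ interiorVertices G X) (hw : w ∉ X) :
    ¬ G.Adj x w :=
  fun h ↦ hw ((mem_interiorVertices.1 hx).2 w h)

lemma card_interedges_compl_comm : #(G.interedges Xᶜ Xᶜᶜ) = #(G.interedges X Xᶜ) := by
  rw [compl_compl]
  have := G.symm
  exact Rel.card_interedges_comm _ _

lemma card_sdiff_interiorVertices_le :
    #(X \ interiorVertices G X) ≤ #(G.interedges X Xᶜ) := by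
  refine card_le_card_of_surjOn Prod.fst fun v hv ↦ ?_
  obtain ⟨hvX, w, hw, hvw⟩ := mem_sdiff_interiorVertices.1 hv
  exact ⟨(v, w), by simp [mk_mem_interedges_iff, *], rfl⟩

lemma card_interedges_interiorVertices_le
    (h : ∀ a ∈ X, a ∉ interiorVertices G X →
      ({x ∈ interiorVertices G X | G.Adj a x} : Set V).Subsingleton) :
    #(G.interedges (interiorVertices G X) (interiorVertices G X)ᶜ) ≤
      #(X \ interiorVertices G X) := by
  have hsnd {x a : V} (hxa : (x, a) ∈ G.interedges (interiorVertices G X) (interiorVertices G X)ᶜ) :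
      x ∈ interiorVertices G X ∧ a ∈ X ∧ a ∉ interiorVertices G X ∧ G.Adj a x := by
    obtain ⟨hx, ha, hadj⟩ := G.mk_mem_interedges_iff.1 hxa
    exact ⟨hx, (mem_interiorVertices.1 hx).2 a hadj, mem_compl.1 ha, hadj.symm⟩
  refine card_le_card_of_injOn Prod.snd ?_ ?_
  · rintro ⟨x, a⟩ hxa
    obtain ⟨-, ha, ha', -⟩ := hsnd hxa
    exact mem_sdiff.2 ⟨ha, ha'⟩
  · rintro ⟨x, a⟩ hxa ⟨z, a'⟩ hza (rfl : a = a')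
    obtain ⟨hx, ha, ha', hax⟩ := hsnd hxa
    obtain ⟨hz, -, -, haz⟩ := hsnd hza
    exact Prod.ext (h a ha ha' ⟨hx, hax⟩ ⟨hz, haz⟩) rfl

lemma exists_adj_mem_interiorVertices (hv : v ∈ X) (hlt : #(G.interedges X Xᶜ) < G.degree v) :
    ∃ x ∈ interiorVertices G X, G.Adj v x := by
  by_contra! hcon
  refine hlt.not_ge ?_
  -- A neighbour `w` of `v` is charged to the cut edge `v w` if `w ∉ X`, and else to one at `w`.
  refine card_le_card_of_surjOn (fun p ↦ if p.1 = v then p.2 else p.1) fun w hw ↦ ?_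
  have hvw : G.Adj v w := by simpa using hw
  by_cases hwX : w ∈ X
  · obtain ⟨-, u, hu, hwu⟩ := mem_sdiff_interiorVertices.1
      (mem_sdiff.2 ⟨hwX, fun hwi ↦ hcon w hwi hvw⟩)
    exact ⟨(w, u), by simp [mk_mem_interedges_iff, *], if_neg hvw.ne'⟩
  · exact ⟨(v, w), by simp [mk_mem_interedges_iff, *], if_pos rfl⟩

lemma subsingleton_adj_interiorVertices (hZ2 : IsEmpty (Z2 ↪g G)) (hT : IsEmpty (T113 ↪g G))
    (hlt : #(G.interedges X Xᶜ) < G.minDegree) {a : V} (ha : a ∈ X)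
    (ha' : a ∉ interiorVertices G X) :
    ({x ∈ interiorVertices G X | G.Adj a x} : Set V).Subsingleton := by
  rintro x ⟨hx, hax⟩ z ⟨hz, haz⟩
  have hlt' (v : V) : #(G.interedges Xᶜ Xᶜᶜ) < G.degree v :=
    card_interedges_compl_comm.trans_lt (hlt.trans_le (G.minDegree_le_degree v))
  obtain ⟨-, b, hb, hab⟩ := mem_sdiff_interiorVertices.1 (mem_sdiff.2 ⟨ha, ha'⟩)
  obtain ⟨y, hy, hby⟩ := exists_adj_mem_interiorVertices (mem_compl.2 hb) (hlt' b)
  obtain ⟨y', hy', hyy'⟩ :=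
    exists_adj_mem_interiorVertices (interiorVertices_subset hy) (hlt' y)
  have hX {u : V} (hu : u ∈ interiorVertices G X) :
      ¬ G.Adj u b ∧ ¬ G.Adj u y ∧ ¬ G.Adj u y' :=
    ⟨not_adj_of_mem_interiorVertices hu hb,
      not_adj_of_mem_interiorVertices hu (mem_compl.1 (interiorVertices_subset hy)),
      not_adj_of_mem_interiorVertices hu (mem_compl.1 (interiorVertices_subset hy'))⟩
  have hay : ¬ G.Adj a y := fun h ↦ not_adj_of_mem_interiorVertices hy (by simpa using ha) h.symm
  have hay' : ¬ G.Adj a y' := fun h ↦ not_adj_of_mem_interiorVertices hy' (by simpa using ha) h.symm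
  obtain ⟨hxb, hxy, hxy'⟩ := hX hx
  obtain ⟨hzb, hzy, hzy'⟩ := hX hz
  have hby' : ¬ G.Adj b y' := fun h ↦ not_nonempty_iff.2 hZ2 <|
    nonempty_Z2_embedding hyy' hby.symm h.symm hab.symm hax (hay ·.symm) (hxy ·.symm)
      (hay' ·.symm) (hxy' ·.symm) (hxb ·.symm)
  by_contra hxz
  by_cases hadj : G.Adj x z
  · exact not_nonempty_iff.2 hZ2 <|
      nonempty_Z2_embedding hadj hax.symm haz.symm hab hby hxb hxy hzb hzy hay
  · exact not_nonempty_iff.2 hT <|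
      nonempty_T113_embedding hax haz hab hby hyy' hxz hadj hxb hxy hxy' hzb hzy hzy' hay hay' hby'

theorem minDegree_le_card_interedges_compl (hG : G.Preconnected) (hZ2 : IsEmpty (Z2 ↪g G))
    (hT : IsEmpty (T113 ↪g G)) (X : Finset V) (hX : X.Nonempty) (hXc : Xᶜ.Nonempty) :
    G.minDegree ≤ #(G.interedges X Xᶜ) := by
  induction X using Finset.strongInduction with
  | H X ih =>
    by_contra! hlt
    obtain ⟨a, ha, b, hb, hab⟩ := exists_mem_adj_notMem hG (s := X) hX (by rwa [← coe_compl])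
    have hssub : interiorVertices G X ⊂ X :=
      ⟨interiorVertices_subset, fun h ↦ not_adj_of_mem_interiorVertices (h ha) hb hab⟩
    obtain ⟨x, hx, -⟩ :=
      exists_adj_mem_interiorVertices ha (hlt.trans_le (G.minDegree_le_degree a))
    refine hlt.not_ge ?_
    calc
      G.minDegree ≤ #(G.interedges (interiorVertices G X) (interiorVertices G X)ᶜ) :=
        ih _ hssub ⟨x, hx⟩ (hXc.mono (compl_subset_compl.2 hssub.subset))
      _ ≤ #(X \ interiorVertices G X) :=
        card_interedges_interiorVertices_le
          fun _ ↦ subsingleton_adj_interiorVertices hZ2 hT hlt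
      _ ≤ #(G.interedges X Xᶜ) := card_sdiff_interiorVertices_le

end Cuts

/-- Every connected `{Z₂, T_{1,1,3}}`-free graph on at least 2 vertices has
edge-connectivity equal to its minimum degree. -/
theorem z2_t113_free_edgeConn_eq_minDeg {V : Type*} [Fintype V] (G : SimpleGraph V)
    (hG : G.Connected) (hcard : 2 ≤ Fintype.card V)
    (hZ2 : IsEmpty (Z2 ↪g G)) (hT : IsEmpty (T113 ↪g G)) :
    edgeConn G = minDeg G := by
  classical
  have : Nonempty V := hG.nonempty
  have : Nontrivial V := Fintype.one_lt_card_iff_nontrivial.1 hcard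
  rw [minDeg_eq_minDegree]
  refine le_antisymm ?_ ?_
  · exact G.le_minDegree_of_forall_le_degree _ fun _ ↦ (isEdgeConnected_edgeConn G).le_degree
  · exact le_edgeConn_of_isEdgeConnected <|
      isEdgeConnected_of_forall_le_card_interedges_compl <|
        minDegree_le_card_interedges_compl hG.preconnected hZ2 hT
end

section
/- If G is a connected bipartite graph on n vertices with n ≤ 4δ(G) − 1, then the edge-connectivity of G equals its minimum degree. -/
open SimpleGraph

/-!
Suppose fewer than `δ` edges leave a nonempty vertex set `S`. Every `v ∈ S` then has a neighbour
in `S` all of whose neighbours lie in `S`: otherwise each neighbour of `v` would contribute an edge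
of the cut, and these edges are distinct. Starting anywhere in `S` and applying this twice gives
adjacent `w` and `x` whose neighbourhoods lie in `S`. Without triangles these neighbourhoods are
disjoint, so `|S| ≥ 2δ`. A cut with fewer than `δ` edges would make both of its sides this large,
giving `n ≥ 4δ`.
-/

section EdgeBoundary

variable {V : Type*} {G : SimpleGraph V} {S : Set V} {d : ℕ} {v w : V}

/-- The edge boundary of `S`, that is, the edge cut separating `S` from `Sᶜ`: the edges of `G` with
exactly one endpoint in `S`. It is a set of unordered pairs, so that it can be compared with the
edge sets deleted in `SimpleGraph.IsEdgeConnected`. -/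
def edgeBoundary (G : SimpleGraph V) (S : Set V) : Set (Sym2 V) :=
  {e | ∃ x ∈ S, ∃ y ∉ S, G.Adj x y ∧ s(x, y) = e}

lemma edgeBoundary_compl (G : SimpleGraph V) (S : Set V) :
    edgeBoundary G Sᶜ = edgeBoundary G S := by
  ext e
  constructor
  · rintro ⟨x, hx, y, hy, hxy, rfl⟩
    exact ⟨y, Set.notMem_compl_iff.mp hy, x, hx, hxy.symm, Sym2.eq_swap⟩
  · rintro ⟨x, hx, y, hy, hxy, rfl⟩
    exact ⟨y, hy, x, Set.notMem_compl_iff.mpr hx, hxy.symm, Sym2.eq_swap⟩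

lemma isEdgeConnected_of_forall_le_encard_edgeBoundary
    (h : ∀ S : Set V, S.Nonempty → Sᶜ.Nonempty → d ≤ (edgeBoundary G S).encard) :
    G.IsEdgeConnected d := by
  intro u v s hs
  by_contra huv
  let S : Set V := {w | (G.deleteEdges s).Reachable u w}
  have hsub : edgeBoundary G S ⊆ s := by
    rintro _ ⟨x, hx, y, hy, hxy, rfl⟩
    by_contra hxys
    exact hy (hx.trans (deleteEdges_adj.mpr ⟨hxy, hxys⟩).reachable)
  exact ((h S ⟨u, .rfl⟩ ⟨v, huv⟩).trans (Set.encard_le_encard hsub)).not_gt hs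

lemma eq_and_eq_of_sym2Mk_eq_of_mem_of_notMem {x y x' y' : V} (hx : x ∈ S) (hy' : y' ∉ S)
    (h : s(x, y) = s(x', y')) : x = x' ∧ y = y' :=
  (Sym2.eq_iff.mp h).resolve_right fun ⟨hxy', _⟩ ↦ hy' (hxy' ▸ hx)

lemma encard_neighborSet_le_encard_edgeBoundary (hv : v ∈ S)
    (h : ∀ w ∈ S, G.Adj v w → ¬ G.neighborSet w ⊆ S) :
    (G.neighborSet v).encard ≤ (edgeBoundary G S).encard := by
  classical
  have exists_exit : ∀ w ∈ S, G.Adj v w → ∃ y ∉ S, G.Adj w y := fun w hw hvw ↦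
    let ⟨y, hwy, hy⟩ := Set.not_subset.mp (h w hw hvw)
    ⟨y, hy, hwy⟩
  choose! exit exit_notMem adj_exit using exists_exit
  let cutEdge (w : V) : Sym2 V := if w ∈ S then s(w, exit w) else s(v, w)
  have mapsTo : Set.MapsTo cutEdge (G.neighborSet v) (edgeBoundary G S) := by
    intro w (hvw : G.Adj v w)
    by_cases hw : w ∈ S
    · exact ⟨w, hw, exit w, exit_notMem w hw hvw, adj_exit w hw hvw, (if_pos hw).symm⟩
    · exact ⟨v, hv, w, hw, hvw, (if_neg hw).symm⟩
  have injOn : Set.InjOn cutEdge (G.neighborSet v) := by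
    intro a (ha : G.Adj v a) b (hb : G.Adj v b) hab
    by_cases haS : a ∈ S <;> by_cases hbS : b ∈ S <;>
      simp only [cutEdge, haS, hbS, if_true, if_false] at hab
    · exact (eq_and_eq_of_sym2Mk_eq_of_mem_of_notMem haS (exit_notMem b hbS hb) hab).1
    · exact absurd (eq_and_eq_of_sym2Mk_eq_of_mem_of_notMem haS hbS hab).1 ha.ne'
    · exact absurd (eq_and_eq_of_sym2Mk_eq_of_mem_of_notMem hv (exit_notMem b hbS hb) hab).1 hb.ne
    · exact (eq_and_eq_of_sym2Mk_eq_of_mem_of_notMem hv hbS hab).2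
  exact Set.encard_le_encard_of_injOn mapsTo injOn

lemma exists_adj_neighborSet_subset_of_encard_edgeBoundary_lt (hv : v ∈ S)
    (h : (edgeBoundary G S).encard < (G.neighborSet v).encard) :
    ∃ w ∈ S, G.Adj v w ∧ G.neighborSet w ⊆ S := by
  by_contra! hcon
  exact (encard_neighborSet_le_encard_edgeBoundary hv hcon).not_gt h

lemma disjoint_neighborSet_of_cliqueFree_three (hG : G.CliqueFree 3) (hvw : G.Adj v w) :
    Disjoint (G.neighborSet v) (G.neighborSet w) :=
  Set.disjoint_left.mpr fun x hvx hwx ↦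
    isIndepSet_neighborSet_of_triangleFree G hG x hvx.symm hwx.symm hvw.ne hvw

lemma two_mul_le_encard_of_encard_edgeBoundary_lt {d : ℕ∞} (hG : G.CliqueFree 3)
    (hdeg : ∀ v, d ≤ (G.neighborSet v).encard) (hS : S.Nonempty)
    (hcut : (edgeBoundary G S).encard < d) : 2 * d ≤ S.encard := by
  obtain ⟨v, hv⟩ := hS
  obtain ⟨w, hw, -, hwS⟩ :=
    exists_adj_neighborSet_subset_of_encard_edgeBoundary_lt hv (hcut.trans_le (hdeg v))
  obtain ⟨x, -, hwx, hxS⟩ :=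
    exists_adj_neighborSet_subset_of_encard_edgeBoundary_lt hw (hcut.trans_le (hdeg w))
  calc 2 * d = d + d := two_mul _
    _ ≤ (G.neighborSet w).encard + (G.neighborSet x).encard := add_le_add (hdeg w) (hdeg x)
    _ = (G.neighborSet w ∪ G.neighborSet x).encard :=
      (Set.encard_union_eq (disjoint_neighborSet_of_cliqueFree_three hG hwx)).symm
    _ ≤ S.encard := Set.encard_le_encard (Set.union_subset hwS hxS)

theorem isEdgeConnected_of_cliqueFree_three (hG : G.CliqueFree 3)
    (hdeg : ∀ v, d ≤ (G.neighborSet v).encard) (hcard : ENat.card V < 4 * d) :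
    G.IsEdgeConnected d := by
  refine isEdgeConnected_of_forall_le_encard_edgeBoundary fun S hS hSc ↦ ?_
  by_contra! hcut
  have hcut' : (edgeBoundary G Sᶜ).encard < d := by rwa [edgeBoundary_compl]
  refine hcard.not_ge ?_
  calc (4 * d : ℕ∞) = 2 * d + 2 * d := by ring
    _ ≤ S.encard + Sᶜ.encard :=
      add_le_add (two_mul_le_encard_of_encard_edgeBoundary_lt hG hdeg hS hcut)
        (two_mul_le_encard_of_encard_edgeBoundary_lt hG hdeg hSc hcut')
    _ = ENat.card V := by rw [Set.encard_add_encard_compl, Set.encard_univ]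

end EdgeBoundary

section Invariants

variable {V : Type*} [Fintype V] {G : SimpleGraph V} {k : ℕ}

lemma le_edgeConn_iff_isEdgeConnected [Nontrivial V] : k ≤ edgeConn G ↔ G.IsEdgeConnected k := by
  classical
  have hne : {k | ∃ F : Finset (Sym2 V), ↑F ⊆ G.edgeSet ∧ F.card = k ∧
      ¬ (G.deleteEdges ↑F).Connected}.Nonempty :=
    ⟨_, G.edgeFinset, by simp, rfl, by simp [not_connected_bot]⟩
  rw [edgeConn, le_csInf_iff'' hne]
  constructor
  · intro h u v s hs
    by_contra huv
    let F : Finset (Sym2 V) := (s ∩ G.edgeSet).toFinset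
    have hF : (F : Set (Sym2 V)) = s ∩ G.edgeSet := Set.coe_toFinset _
    have hcut : ¬ (G.deleteEdges (F : Set (Sym2 V))).Connected := fun hconn ↦
      huv (by simpa only [hF, ← deleteEdges_eq_inter_edgeSet] using hconn u v)
    have hcard : k ≤ F.card := h _ ⟨F, hF ▸ Set.inter_subset_right, rfl, hcut⟩
    refine hs.not_ge ?_
    calc (k : ℕ∞) ≤ F.card := mod_cast hcard
      _ = (s ∩ G.edgeSet).encard := by rw [← Set.encard_coe_eq_coe_finsetCard, hF]
      _ ≤ s.encard := Set.encard_le_encard Set.inter_subset_left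
  · rintro h _ ⟨F, -, rfl, hF⟩
    by_contra! hlt
    exact hF ⟨fun u v ↦ h u v (by simpa using hlt)⟩

lemma le_minDeg_iff [Nonempty V] : k ≤ minDeg G ↔ ∀ v, k ≤ (G.neighborSet v).encard := by
  have hne : {d | ∃ v : V, d = (G.neighborSet v).ncard}.Nonempty :=
    ⟨_, Classical.arbitrary V, rfl⟩
  rw [minDeg, le_csInf_iff'' hne]
  simp only [Set.mem_ofPred_eq, forall_exists_index, forall_eq_apply_imp_iff,
    ← Set.coe_ncard_eq_encard, Nat.cast_le]

lemma nontrivial_of_minDeg_pos (h : 0 < minDeg G) : Nontrivial V := by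
  obtain ⟨_, v, -⟩ := Nat.nonempty_of_pos_sInf h
  have hpos : 0 < (G.neighborSet v).ncard := h.trans_le (Nat.sInf_le ⟨v, rfl⟩)
  obtain ⟨w, hvw⟩ := Set.nonempty_of_ncard_ne_zero hpos.ne'
  exact ⟨v, w, hvw.ne⟩

lemma edgeConn_le_minDeg [Nontrivial V] (G : SimpleGraph V) : edgeConn G ≤ minDeg G := by
  classical
  refine le_minDeg_iff.mpr fun v ↦ ?_
  rw [Set.encard_eq_coe_toFinset_card]
  exact_mod_cast (le_edgeConn_iff_isEdgeConnected.mp le_rfl).le_degree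

end Invariants

theorem volkmann_bipartite_edgeConn_eq_minDeg_general {V : Type*} [Fintype V] (G : SimpleGraph V)
    (hG : G.CliqueFree 3) (h : Fintype.card V < 4 * minDeg G) : edgeConn G = minDeg G := by
  have : Nontrivial V := nontrivial_of_minDeg_pos (G := G) (by lia)
  refine (edgeConn_le_minDeg G).antisymm (le_edgeConn_iff_isEdgeConnected.mpr ?_)
  refine isEdgeConnected_of_cliqueFree_three hG (le_minDeg_iff.mp le_rfl) ?_
  rw [ENat.card_eq_coe_fintype_card]
  exact_mod_cast h

/-- Volkmann: a connected bipartite graph with `n ≤ 4δ(G) - 1` has `κ'(G) = δ(G)`. -/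
theorem volkmann_bipartite_edgeConn_eq_minDeg {V : Type*} [Fintype V] (G : SimpleGraph V)
    (hG : G.Connected) (hcard : 2 ≤ Fintype.card V)
    (hbip : G.Colorable 2) (h : Fintype.card V ≤ 4 * minDeg G - 1) :
    edgeConn G = minDeg G :=
  volkmann_bipartite_edgeConn_eq_minDeg_general G (hbip.cliqueFree (Nat.lt_add_one 2)) (by lia)
end
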